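/- The first player has a winning strategy in the achievement game Sim_a on K_6 with target K_3: when two players, Red and Green, alternately color one so-far uncolored edge of the complete graph K_6 in their own color with Red moving first, and the first player to complete a triangle all three of whose edges have his own color wins, Red can force a win. -/

import Mathlib

/-- The 15 edges of the complete graph `K_6`: unordered pairs of distinct vertices. -/
abbrev Edge6 := {e : Sym2 (Fin 6) // ¬ e.IsDiag}

/-- The edge of `K_6` joining two distinct vertices. -/
def mkEdge6 (a b : Fin 6) (h : a ≠ b) : Edge6 :=
  ⟨s(a, b), by simpa using h⟩

/-- A position of the achievement game Sim_a: each edge of `K_6` is uncolored (`none`),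
colored by Red (`some true`) or colored by Green (`some false`). -/
abbrev Pos := Edge6 → Option Bool

/-- The initial position: all edges uncolored. -/
def startPos : Pos := fun _ => none

/-- Player `c` colors edge `e`. -/
def colorEdge (p : Pos) (c : Bool) (e : Edge6) : Pos :=
  Function.update p e (some c)

/-- The player making the `k`-th move (moves are numbered from 0):
Red (`true`) moves first and the players alternate. -/
def playerAt (k : ℕ) : Bool := decide (k % 2 = 0)

/-- The position reached from `p` after the list of moves `ms`, the first element of
`ms` being made by the player moving at step `k`. -/
def posFrom (p : Pos) (k : ℕ) : List Edge6 → Pos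
  | [] => p
  | e :: ms => posFrom (colorEdge p (playerAt k) e) (k + 1) ms

/-- The position reached from the empty board after the list of moves `ms`. -/
def posAfter (ms : List Edge6) : Pos := posFrom startPos 0 ms

/-- In position `p`, player `c` has completed a monochromatic triangle in his own color:
three vertices all three of whose connecting edges have color `c`. -/
def OwnsTriangle (p : Pos) (c : Bool) : Prop :=
  ∃ a b d : Fin 6, ∃ hab : a ≠ b, ∃ had : a ≠ d, ∃ hbd : b ≠ d,
    p (mkEdge6 a b hab) = some c ∧ p (mkEdge6 a d had) = some c ∧
      p (mkEdge6 b d hbd) = some c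

/-- A play (list of moves, alternately by Red and Green, Red first) in which Red follows
the strategy `σ`: every move colors a so-far uncolored edge, and every move of Red is
the one prescribed by `σ` at the current position. -/
def FollowsRed (σ : Pos → Edge6) (ms : List Edge6) : Prop :=
  ∀ i, ∀ h : i < ms.length,
    (posAfter (ms.take i)) (ms.get ⟨i, h⟩) = none ∧
    (playerAt i = true → ms.get ⟨i, h⟩ = σ (posAfter (ms.take i)))

/-! Red opens with an edge; Green answers `f`, and since `f` is a different edge, Red's edge is `ca`
with `a ∉ f`. Six vertices leave room for two further vertices `b`, `d` outside `f`. Red plays `cb`,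
threatening `ab`, and Green must answer `ab`. As `f` and `ab` are disjoint, they do not lie in a
common triangle, so Green threatens nothing; Red plays `cd`, threatening both `ad` and `bd`, and
completes a triangle with his fourth move. -/

/-- A position of a game in which Red (`true`) and Green (`false`) alternately claim elements of
the board `E`: each element is free (`none`) or belongs to a player. -/
abbrev Position (E : Type*) := E → Option Bool

section Game

variable {E : Type*} [DecidableEq E]

/-- Player `c` claims the element `e`. -/
def Position.color (p : Position E) (c : Bool) (e : E) : Position E :=
  Function.update p e (some c)

/-- The position reached from `p` by a list of alternate moves, the first one made by `c`. -/
def Position.play (p : Position E) (c : Bool) : List E → Position E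
  | [] => p
  | e :: ms => (p.color c e).play (!c) ms

/-- `ms` is a legal sequence of moves from `p`, with `c` moving first, in which Red obeys the
strategy `σ`. -/
def FollowsStrategy (σ : Position E → E) (p : Position E) (c : Bool) : List E → Prop
  | [] => True
  | e :: ms => p e = none ∧ (c = true → e = σ p) ∧ FollowsStrategy σ (p.color c e) (!c) ms

/-- In the position `p`, with Red to move, Red can force a position satisfying `W` while Green
makes at most `n` more moves. -/
inductive RedForces (W : Position E → Prop) : ℕ → Position E → Prop
  | win {n : ℕ} {p : Position E} (e : E) (he : p e = none) (hW : W (p.color true e)) :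
      RedForces W n p
  | move {n : ℕ} {p : Position E} (e : E) (he : p e = none)
      (hreply : ∀ f, p.color true e f = none → RedForces W n ((p.color true e).color false f)) :
      RedForces W (n + 1) p

/-- A legal move of Red that reaches `W` at once, or after which every reply of Green leaves a
position where Red forces `W` within some number `m < n` of replies, the same for all replies. -/
def IsForcingMove (W : Position E → Prop) (n : ℕ) (p : Position E) (e : E) : Prop :=
  p e = none ∧ (W (p.color true e) ∨
    ∃ m < n, ∀ f, p.color true e f = none → RedForces W m ((p.color true e).color false f))

variable {W : Position E → Prop} {n : ℕ} {p : Position E}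

theorem Position.color_apply (c : Bool) (e f : E) :
    p.color c e f = if f = e then some c else p f :=
  Function.update_apply ..

theorem Position.play_apply_of_notMem {e : E} {ms : List E} (he : e ∉ ms) (c : Bool) :
    p.play c ms e = p e := by
  induction ms generalizing p c with
  | nil => rfl
  | cons m ms ih =>
    obtain ⟨hem, hems⟩ := not_or.1 (mt List.mem_cons.2 he)
    rw [play, ih hems, color_apply, if_neg hem]

theorem card_le_length_of_play_ne_none [Fintype E] {c : Bool} {ms : List E}
    (h : ∀ e, Position.play (fun _ => none) c ms e ≠ none) : Fintype.card E ≤ ms.length := by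
  have hmem (e : E) : e ∈ ms := by
    by_contra he
    exact h e (Position.play_apply_of_notMem he c)
  calc Fintype.card E = ms.toFinset.card := by
        rw [Finset.eq_univ_of_forall fun e => List.mem_toFinset.2 (hmem e), Finset.card_univ]
    _ ≤ ms.length := ms.toFinset_card_le

theorem IsForcingMove.mono {m : ℕ} {e : E} (h : IsForcingMove W m p e) (hmn : m ≤ n) :
    IsForcingMove W n p e :=
  ⟨h.1, h.2.imp_right fun ⟨l, hl, hreply⟩ => ⟨l, hl.trans_le hmn, hreply⟩⟩

theorem RedForces.exists_isForcingMove (h : RedForces W n p) : ∃ e, IsForcingMove W n p e := by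
  cases h with
  | win e he hW => exact ⟨e, he, .inl hW⟩
  | move e he hreply => exact ⟨e, he, .inr ⟨_, Nat.lt_succ_self _, hreply⟩⟩

-- A strategy sees only the position, so one move has to serve all `n`: take it for the least `n`.
theorem exists_forcing_strategy [Nonempty E] (W : Position E → Prop) :
    ∃ σ : Position E → E, (∀ p : Position E, (∃ e, p e = none) → p (σ p) = none) ∧
      ∀ n p, RedForces W n p → IsForcingMove W n p (σ p) := by
  classical
  suffices h : ∀ p : Position E, ∃ s, ((∃ e, p e = none) → p s = none) ∧
      ∀ n, RedForces W n p → IsForcingMove W n p s by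
    choose σ hσ using h
    exact ⟨σ, fun p => (hσ p).1, fun n p => (hσ p).2 n⟩
  intro p
  by_cases hforces : ∃ n, RedForces W n p
  · obtain ⟨e, he⟩ := (Nat.find_spec hforces).exists_isForcingMove
    exact ⟨e, fun _ => he.1, fun n hn => he.mono (Nat.find_min' hforces hn)⟩
  · exact ⟨Classical.epsilon fun e => p e = none, Classical.epsilon_spec,
      fun n hn => (hforces ⟨n, hn⟩).elim⟩

theorem RedForces.exists_le_play_take {σ : Position E → E}
    (hσ : ∀ n p, RedForces W n p → IsForcingMove W n p (σ p)) (h : RedForces W n p) {ms : List E}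
    (hms : FollowsStrategy σ p true ms) (hlen : 2 * n + 1 ≤ ms.length) :
    ∃ j ≤ 2 * n + 1, W (p.play true (ms.take j)) := by
  induction n using Nat.strong_induction_on generalizing p ms with
  | _ n ih =>
    obtain _ | ⟨e, ms⟩ := ms
    · simp at hlen
    obtain ⟨-, he, hms⟩ := hms
    obtain rfl := he rfl
    obtain ⟨-, hW | ⟨m, hmn, hreply⟩⟩ := hσ n p h
    · exact ⟨1, by omega, hW⟩
    obtain _ | ⟨f, ms⟩ := ms
    · simp at hlen; omega
    obtain ⟨hf, -, hms⟩ := hms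
    obtain ⟨j, hj, hW⟩ := ih m hmn (hreply f hf) hms (by simp at hlen; omega)
    exact ⟨j + 2, by omega, hW⟩

end Game

section Triangles

/-- The edges of the complete graph on `V`. -/
abbrev CompleteEdge (V : Type*) := {e : Sym2 V // ¬ e.IsDiag}

variable {V : Type*}

/-- The edge joining two distinct vertices. -/
def edgeOfNe {a b : V} (hab : a ≠ b) : CompleteEdge V :=
  ⟨s(a, b), hab⟩

/-- Player `c` owns all three edges of some triangle. -/
def HasTriangle (p : Position (CompleteEdge V)) (c : Bool) : Prop :=
  ∃ a b d : V, ∃ hab : a ≠ b, ∃ had : a ≠ d, ∃ hbd : b ≠ d,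
    p (edgeOfNe hab) = some c ∧ p (edgeOfNe had) = some c ∧ p (edgeOfNe hbd) = some c

/-- Red has completed a triangle and Green has not. -/
def RedWon (p : Position (CompleteEdge V)) : Prop :=
  HasTriangle p true ∧ ¬ HasTriangle p false

theorem edgeOfNe_eq_iff {a b x y : V} {hab : a ≠ b} {hxy : x ≠ y} :
    edgeOfNe hab = edgeOfNe hxy ↔ a = x ∧ b = y ∨ a = y ∧ b = x :=
  Subtype.ext_iff.trans Sym2.eq_iff

theorem mem_edgeOfNe {a b x : V} {hab : a ≠ b} : x ∈ (edgeOfNe hab).1 ↔ x = a ∨ x = b :=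
  Sym2.mem_iff

theorem not_hasTriangle_of_disjoint {p : Position (CompleteEdge V)} {c : Bool}
    {f g h : CompleteEdge V} (hfg : ∀ v ∈ f.1, v ∉ g.1)
    (hp : ∀ e, p e = some c → e = f ∨ e = g ∨ e = h) : ¬ HasTriangle p c := by
  rintro ⟨a, b, d, hab, had, hbd, hpab, hpad, hpbd⟩
  have hmeet {v : V} {e e' : CompleteEdge V} (he : v ∈ e.1) (he' : v ∈ e'.1) :
      ¬ (e = f ∧ e' = g) ∧ ¬ (e = g ∧ e' = f) := by
    refine ⟨?_, ?_⟩ <;> rintro ⟨rfl, rfl⟩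
    exacts [hfg v he he', hfg v he' he]
  have ha := hmeet (e := edgeOfNe hab) (e' := edgeOfNe had)
    (mem_edgeOfNe.2 (.inl rfl)) (mem_edgeOfNe.2 (.inl rfl))
  have hb := hmeet (e := edgeOfNe hab) (e' := edgeOfNe hbd)
    (mem_edgeOfNe.2 (.inr rfl)) (mem_edgeOfNe.2 (.inl rfl))
  have hd := hmeet (e := edgeOfNe had) (e' := edgeOfNe hbd)
    (mem_edgeOfNe.2 (.inr rfl)) (mem_edgeOfNe.2 (.inr rfl))
  -- At most one side of the triangle is `h`; the other two are `f` and `g`, but they meet.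
  grind [edgeOfNe_eq_iff]

variable [DecidableEq V] {p : Position (CompleteEdge V)} {a b c d : V}

theorem RedForces.of_threat {n : ℕ} (hca : c ≠ a) (hcb : c ≠ b) (hab : a ≠ b)
    (hpca : p (edgeOfNe hca) = some true) (hpcb : p (edgeOfNe hcb) = some true)
    (hpab : p (edgeOfNe hab) = none) (hgreen : ¬ HasTriangle p false) : RedForces RedWon n p := by
  refine .win (edgeOfNe hab) hpab ⟨⟨c, a, b, hca, hcb, hab, ?_⟩, ?_⟩
  · simp [Position.color_apply, hpca, hpcb]
  · rintro ⟨x, y, z, hxy, hxz, hyz, h⟩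
    refine hgreen ⟨x, y, z, hxy, hxz, hyz, ?_⟩
    grind [Position.color_apply]

theorem RedForces.of_double_threat {f g : CompleteEdge V} (hca : c ≠ a) (hcb : c ≠ b) (hcd : c ≠ d)
    (hab : a ≠ b) (had : a ≠ d) (hbd : b ≠ d) (hfg : ∀ v ∈ f.1, v ∉ g.1)
    (hpca : p (edgeOfNe hca) = some true) (hpcb : p (edgeOfNe hcb) = some true)
    (hpcd : p (edgeOfNe hcd) = none) (hpad : p (edgeOfNe had) = none)
    (hpbd : p (edgeOfNe hbd) = none) (hgreen : ∀ e, p e = some false → e = f ∨ e = g) :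
    RedForces RedWon 1 p := by
  refine .move (edgeOfNe hcd) hpcd fun h _ => ?_
  set q := (p.color true (edgeOfNe hcd)).color false h
  have hq : ¬ HasTriangle q false := by
    refine not_hasTriangle_of_disjoint (h := h) hfg fun e he => ?_
    grind [Position.color_apply]
  by_cases hhad : h = edgeOfNe had
  · refine .of_threat hcb hcd hbd ?_ ?_ ?_ hq <;> grind [Position.color_apply, edgeOfNe_eq_iff]
  · refine .of_threat hca hcd had ?_ ?_ ?_ hq <;> grind [Position.color_apply, edgeOfNe_eq_iff]

theorem RedForces.of_free_vertices {f : CompleteEdge V} (hca : c ≠ a) (hcb : c ≠ b) (hcd : c ≠ d)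
    (hab : a ≠ b) (had : a ≠ d) (hbd : b ≠ d) (haf : a ∉ f.1) (hbf : b ∉ f.1)
    (hred : p (edgeOfNe hca) = some true) (hgreen : ∀ e, p e = some false → e = f)
    (hb : ∀ e : CompleteEdge V, b ∈ e.1 → p e = none)
    (hd : ∀ e : CompleteEdge V, d ∈ e.1 → p e = none) : RedForces RedWon 2 p := by
  have hdisj : ∀ v ∈ f.1, v ∉ (edgeOfNe hab).1 := by
    intro v hvf hv
    obtain rfl | rfl := mem_edgeOfNe.1 hv
    exacts [haf hvf, hbf hvf]
  have hcb_free : p (edgeOfNe hcb) = none := hb _ (mem_edgeOfNe.2 (.inr rfl))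
  have hab_free : p (edgeOfNe hab) = none := hb _ (mem_edgeOfNe.2 (.inr rfl))
  have hcd_free : p (edgeOfNe hcd) = none := hd _ (mem_edgeOfNe.2 (.inr rfl))
  have had_free : p (edgeOfNe had) = none := hd _ (mem_edgeOfNe.2 (.inr rfl))
  have hbd_free : p (edgeOfNe hbd) = none := hd _ (mem_edgeOfNe.2 (.inr rfl))
  refine .move (edgeOfNe hcb) hcb_free fun g _ => ?_
  set q := (p.color true (edgeOfNe hcb)).color false g
  by_cases hg : g = edgeOfNe hab
  · subst hg
    refine .of_double_threat hca hcb hcd hab had hbd hdisj ?_ ?_ ?_ ?_ ?_ ?_ <;>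
      grind [Position.color_apply, edgeOfNe_eq_iff]
  · have hq : ¬ HasTriangle q false :=
      not_hasTriangle_of_disjoint (h := g) hdisj fun e he => by grind [Position.color_apply]
    refine .of_threat hca hcb hab ?_ ?_ ?_ hq <;> grind [Position.color_apply, edgeOfNe_eq_iff]

theorem redForces_two_of_notMem (hV : 6 ≤ Cardinal.mk V) (hca : c ≠ a) {f : CompleteEdge V}
    (hf : f ≠ edgeOfNe hca) (haf : a ∉ f.1) :
    RedForces RedWon 2
      (Position.color (Position.color (fun _ => none) true (edgeOfNe hca)) false f) := by
  obtain ⟨⟨x, y⟩, hxy⟩ := f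
  have hnew (l : List V) (hl : l.length < 6) : ∃ v, v ∉ l :=
    Cardinal.exists_notMem_of_length_lt l (lt_of_lt_of_le (by exact_mod_cast hl) hV)
  obtain ⟨b, hb⟩ := hnew [c, a, x, y] (by simp)
  obtain ⟨d, hd⟩ := hnew [b, c, a, x, y] (by simp)
  simp only [List.mem_cons, List.not_mem_nil, or_false, not_or] at hb hd
  obtain ⟨hbc, hba, hbx, hby⟩ := hb
  obtain ⟨hdb, hdc, hda, hdx, hdy⟩ := hd
  have hfree {v : V} (hvc : v ≠ c) (hva : v ≠ a) (hvx : v ≠ x) (hvy : v ≠ y) (e : CompleteEdge V)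
      (hv : v ∈ e.1) : Position.color (Position.color (fun _ => none) true (edgeOfNe hca)) false
        ⟨s(x, y), hxy⟩ e = none := by
    have hef : e ≠ ⟨s(x, y), hxy⟩ := by
      rintro rfl
      exact (Sym2.mem_iff.1 hv).elim hvx hvy
    have hec : e ≠ edgeOfNe hca := by
      rintro rfl
      exact (mem_edgeOfNe.1 hv).elim hvc hva
    simp [Position.color_apply, hef, hec]
  refine .of_free_vertices hca (Ne.symm hbc) (Ne.symm hdc) (Ne.symm hba) (Ne.symm hda)
    (Ne.symm hdb) haf (mt Sym2.mem_iff.1 (not_or.2 ⟨hbx, hby⟩)) ?_ (fun e => ?_)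
    (hfree hbc hba hbx hby) (hfree hdc hda hdx hdy)
  · simp [Position.color_apply, hf.symm]
  · simp only [Position.color_apply]
    split_ifs <;> simp_all

theorem redForces_three_start (hV : 6 ≤ Cardinal.mk V) :
    RedForces RedWon 3 (fun _ : CompleteEdge V => none) := by
  obtain ⟨a, c, hac⟩ : ∃ a c : V, a ≠ c :=
    Cardinal.two_le_iff.1 (le_trans (by exact_mod_cast (by decide : 2 ≤ 6)) hV)
  refine .move (edgeOfNe hac) rfl fun f hf => ?_
  have hfac : f ≠ edgeOfNe hac := by
    rintro rfl
    simp [Position.color_apply] at hf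
  obtain haf | hcf : a ∉ f.1 ∨ c ∉ f.1 := by
    rw [← not_and_or, Sym2.mem_and_mem_iff hac]
    exact fun h => hfac (Subtype.ext h)
  · have hcomm : edgeOfNe hac = edgeOfNe hac.symm := edgeOfNe_eq_iff.2 (.inr ⟨rfl, rfl⟩)
    rw [hcomm] at hfac ⊢
    exact redForces_two_of_notMem hV hac.symm hfac haf
  · exact redForces_two_of_notMem hV hac hfac hcf

theorem red_wins_sim_achievement_general {V : Type*} [DecidableEq V] (hV : 6 ≤ Cardinal.mk V) :
    ∃ σ : Position (CompleteEdge V) → CompleteEdge V,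
      (∀ p : Position (CompleteEdge V), (∃ e, p e = none) → p (σ p) = none) ∧
      ∀ ms : List (CompleteEdge V), FollowsStrategy σ (fun _ => none) true ms → 7 ≤ ms.length →
        ∃ j ≤ 7, RedWon (Position.play (fun _ => none) true (ms.take j)) := by
  have hstart := redForces_three_start hV
  obtain ⟨e, -⟩ := hstart.exists_isForcingMove
  have : Nonempty (CompleteEdge V) := ⟨e⟩
  obtain ⟨σ, hlegal, hσ⟩ := exists_forcing_strategy (E := CompleteEdge V) RedWon
  exact ⟨σ, hlegal, fun ms hms hlen => hstart.exists_le_play_take hσ hms hlen⟩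

end Triangles

theorem playerAt_succ (k : ℕ) : playerAt (k + 1) = !playerAt k := by
  simp only [playerAt, ← decide_not, decide_eq_decide]
  omega

theorem posFrom_eq_play (p : Pos) (k : ℕ) (ms : List Edge6) :
    posFrom p k ms = Position.play p (playerAt k) ms := by
  induction ms generalizing p k with
  | nil => rfl
  | cons e ms ih => rw [posFrom, ih, playerAt_succ]; rfl

theorem followsStrategy_of_posFrom {σ : Pos → Edge6} {p : Pos} {k : ℕ} {ms : List Edge6}
    (h : ∀ i, ∀ hi : i < ms.length, posFrom p k (ms.take i) (ms.get ⟨i, hi⟩) = none ∧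
      (playerAt (k + i) = true → ms.get ⟨i, hi⟩ = σ (posFrom p k (ms.take i)))) :
    FollowsStrategy σ p (playerAt k) ms := by
  induction ms generalizing p k with
  | nil => trivial
  | cons e ms ih =>
    obtain ⟨hfree, hσ⟩ := h 0 (Nat.succ_pos _)
    refine ⟨hfree, hσ, ?_⟩
    rw [← playerAt_succ]
    refine ih fun i hi => ?_
    rw [Nat.add_right_comm]
    exact h (i + 1) (Nat.succ_lt_succ hi)

theorem FollowsRed.followsStrategy {σ : Pos → Edge6} {ms : List Edge6} (h : FollowsRed σ ms) :
    FollowsStrategy σ startPos true ms :=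
  followsStrategy_of_posFrom (k := 0) fun i hi => by
    rw [Nat.zero_add]
    exact h i hi

theorem card_edge6 : Fintype.card Edge6 = 15 :=
  Sym2.card_subtype_not_diag

/-- The first player, Red, has a winning strategy in the achievement game Sim_a on
`K_6` with target `K_3`: a strategy `σ` such that (a) in every play in which Red follows
`σ`, whenever it is Red's turn and some edge is uncolored, `σ` prescribes an uncolored
edge, and (b) every play following `σ` in which all edges have been colored passes
through a position where Red has completed a monochromatic triangle in his color while
Green has not yet completed one in his — i.e. Red completes a monochromatic triangle
strictly before Green does, so Red can force a win. -/
theorem red_wins_sim_achievement :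
    ∃ σ : Pos → Edge6,
      (∀ ms : List Edge6, FollowsRed σ ms → playerAt ms.length = true →
        (∃ e, posAfter ms e = none) → posAfter ms (σ (posAfter ms)) = none) ∧
      (∀ ms : List Edge6, FollowsRed σ ms → (∀ e, posAfter ms e ≠ none) →
        ∃ j ≤ ms.length,
          OwnsTriangle (posAfter (ms.take j)) true ∧
          ¬ OwnsTriangle (posAfter (ms.take j)) false) := by
  obtain ⟨σ, hlegal, hwin⟩ := red_wins_sim_achievement_general (V := Fin 6) (by simp)
  refine ⟨σ, fun ms _ _ => hlegal _, fun ms hms hfull => ?_⟩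
  simp only [posAfter, posFrom_eq_play] at hfull ⊢
  have hlen : 15 ≤ ms.length := card_edge6 ▸ card_le_length_of_play_ne_none hfull
  obtain ⟨j, hj, hred⟩ := hwin ms hms.followsStrategy (by omega)
  exact ⟨j, by omega, hred⟩
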